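/- Let ε ∈ (0, 1/2) be the unique solution in that interval of the equation h(ε) + ε / log₂(16/15) = 1, where h(ε) := ε log₂(1/ε) + (1−ε) log₂(1/(1−ε)) is the binary entropy function (numerically ε = 0.06191...). Then for every δ > 0 there exists N such that for all n ≥ N, the probability that det M_n = 0 is at most (1 − ε + δ)^n. -/

import Mathlib

/-- The random sign matrix determined by a Boolean matrix: entries are `+1` or `-1`. -/
noncomputable def signMatrix (n : ℕ) (b : Fin n → Fin n → Bool) : Matrix (Fin n) (Fin n) ℝ :=
  Matrix.of fun i j => if b i j then (1 : ℝ) else -1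

/-- The binary entropy function. -/
noncomputable def binEntropy (x : ℝ) : ℝ :=
  x * Real.logb 2 (1 / x) + (1 - x) * Real.logb 2 (1 / (1 - x))

/-!
If a sign matrix is singular, one of its rows is a combination of the others, so a primitive integer
vector `w` orthogonal to the other rows is orthogonal to all of them. As `w` is chosen without
looking at that row, the last orthogonality is unlikely unless a random signed sum of the entries of
`w` vanishes with large probability.

To count the possible `w`, reduce modulo powers of `3` up to `3 ^ J ≈ (10 / 9) ^ n`. If the signed
sum vanishes modulo `3 ^ J` with probability at most `2 / 3 ^ J`, the row contributes probability
`O((9 / 10) ^ n)`. Otherwise let `q = 3 ^ j` be the first power modulo which the probability exceeds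
`2 / q`; by minimality it is at most `6 / q`. A fixed vector modulo `q` of this kind is annihilated
by all rows with probability at most `(6 / q) ^ n`, so it suffices that there are at most
`(q / 12) ^ n` such vectors. Those `w` with few nonzero entries modulo `3` are exceptional and are
handled by a direct union bound.

The count is Fourier analytic. A vector `u` modulo `q` with vanishing probability above `2 / q`
satisfies `∑ ξ ≠ 0, ∏ i, |cos (2 * π * u i * ξ / q)| > 1`. The product over a set of invertible
entries is uniformly small for all but few choices of these entries, by Markov's inequality and
equidistribution. Starting from such small weights, each further random entry typically shrinks the
sum by a constant factor, by Parseval's identity and `|cos t| ≤ 3 / 4 + cos (2 * t) / 4`, so that it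
rarely stays above `1`.
-/

open Finset Matrix
open Real hiding binEntropy

section uniform

variable {α β κ : Type*} [Fintype α] [Fintype β]

lemma card_filter_prod (r : α → β → Prop) [∀ a, DecidablePred (r a)] :
    #{x : α × β | r x.1 x.2} = ∑ a, #{b | r a b} := by
  simp_rw [card_filter, Fintype.sum_prod_type]

lemma card_filter_prod_le (p : α → Prop) [DecidablePred p] (r : α → β → Prop)
    [∀ a, DecidablePred (r a)] {M : ℝ} (hM : 0 ≤ M)
    (h : ∀ a, ¬ p a → (#{b | r a b} : ℝ) ≤ M) :
    (#{x : α × β | r x.1 x.2} : ℝ) ≤ #{a | p a} * Fintype.card β + Fintype.card α * M := by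
  have hfiber (a : α) : (#{b | r a b} : ℝ) ≤ (if p a then (Fintype.card β : ℝ) else 0) + M := by
    split_ifs with ha
    · have : (#{b | r a b} : ℝ) ≤ Fintype.card β := by exact_mod_cast card_le_univ _
      linarith
    · simpa using h a ha
  calc (#{x : α × β | r x.1 x.2} : ℝ) = ∑ a, (#{b | r a b} : ℝ) := by
        rw [card_filter_prod, Nat.cast_sum]
    _ ≤ ∑ a, ((if p a then (Fintype.card β : ℝ) else 0) + M) := sum_le_sum fun a _ => hfiber a
    _ = _ := by
        rw [sum_add_distrib, ← sum_filter, sum_const, sum_const, card_univ, nsmul_eq_mul,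
          nsmul_eq_mul]

variable [Fintype κ] [DecidableEq κ]

lemma dens_piFinset_const (s : Finset α) :
    (Fintype.piFinset fun _ : κ => s).dens = s.dens ^ Fintype.card κ := by
  simp [dens_eq_card_div_card, div_pow]

/-- If the `k`-th entry of a random function must lie in a set determined by the other entries,
condition on those. -/
lemma dens_apply_mem_le [DecidableEq α] (k : κ) (A : ({l : κ // l ≠ k} → α) → Finset α)
    {p : ℝ} (hp : 0 ≤ p) (hA : ∀ c, ((A c).dens : ℝ) ≤ p) :
    (({f : κ → α | f k ∈ A fun l => f l} : Finset (κ → α)).dens : ℝ) ≤ p := by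
  have hcard : #{f : κ → α | f k ∈ A fun l => f l} = ∑ c, #(A c) := by
    rw [card_equiv (Equiv.funSplitAt k α) (t := {x : α × ({l : κ // l ≠ k} → α) | x.1 ∈ A x.2})
      (by simp [Equiv.funSplitAt, Equiv.piSplitAt])]
    rw [card_filter, Fintype.sum_prod_type_right]
    simp
  have hA' (c) : (#(A c) : ℝ) ≤ p * Fintype.card α := by
    rw [← nnratCast_dens_mul_natCast_card]
    gcongr
    exact hA c
  rw [nnratCast_dens, hcard, ← Fintype.card_congr (Equiv.funSplitAt k α).symm, Fintype.card_prod]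
  refine div_le_of_le_mul₀ (by positivity) hp ?_
  push_cast
  calc ∑ c, (#(A c) : ℝ) ≤ ∑ _c : {l : κ // l ≠ k} → α, p * Fintype.card α :=
        sum_le_sum fun c _ => hA' c
    _ = _ := by
        rw [sum_const, card_univ, nsmul_eq_mul]
        ring

end uniform

section signProb

variable {ι R S : Type*} [Ring R] [Ring S]

/-- The vector of signs `±1` encoded by a Boolean vector, `true` standing for `1` as in
`signMatrix`. -/
def signVec (R : Type*) [Ring R] (s : ι → Bool) : ι → R := fun i => if s i then 1 else -1

lemma map_comp_signVec (f : R →+* S) (s : ι → Bool) : f ∘ signVec R s = signVec S s := by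
  ext i
  simp [signVec, apply_ite f]

lemma signVec_update_not [DecidableEq ι] (s : ι → Bool) (i : ι) :
    signVec R (Function.update s i (!s i)) = signVec R s - Pi.single i (2 * signVec R s i) := by
  ext k
  rcases eq_or_ne k i with rfl | hk
  · cases h : s k <;> simp [signVec, h] <;> norm_num
  · simp [signVec, hk]

variable [Fintype ι]

lemma map_signVec_dotProduct (f : R →+* S) (s : ι → Bool) (u : ι → R) :
    f (signVec R s ⬝ᵥ u) = signVec S s ⬝ᵥ f ∘ u := by
  rw [f.map_dotProduct, map_comp_signVec]

open scoped Classical in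
/-- The probability that a uniformly random signed sum of the entries of `u` vanishes. -/
noncomputable def signProb (u : ι → R) : ℝ :=
  ({s : ι → Bool | signVec R s ⬝ᵥ u = 0} : Finset (ι → Bool)).dens

lemma signProb_eq_dens [DecidableEq ι] (u : ι → R)
    [DecidablePred fun s : ι → Bool => signVec R s ⬝ᵥ u = 0] :
    signProb u = ({s : ι → Bool | signVec R s ⬝ᵥ u = 0} : Finset (ι → Bool)).dens := by
  unfold signProb
  congr!

lemma signProb_nonneg (u : ι → R) : 0 ≤ signProb u := by
  unfold signProb
  positivity

lemma signProb_le_one (u : ι → R) : signProb u ≤ 1 := by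
  classical
  unfold signProb
  exact_mod_cast dens_le_one

lemma signProb_le_map (f : R →+* S) (u : ι → R) : signProb u ≤ signProb (f ∘ u) := by
  unfold signProb
  gcongr with s
  intro hs
  rw [← map_signVec_dotProduct, hs, map_zero]

/-- Flipping the `i`-th sign changes the signed sum by `±2 * u i`, so at most one of the two sign
patterns gives zero. -/
lemma signProb_le_half (u : ι → R) {i : ι} (hi : 2 * u i ≠ 0) : signProb u ≤ 1 / 2 := by
  classical
  let flip : (ι → Bool) → (ι → Bool) := fun s => Function.update s i (!s i)
  have hinv : Function.Involutive flip := fun s => by simp [flip]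
  set Z : Finset (ι → Bool) := {s | signVec R s ⬝ᵥ u = 0} with hZ
  have hflip (s) (hs : s ∈ Z) : flip s ∉ Z := by
    rw [hZ, mem_filter_univ] at hs ⊢
    simp only [flip, signVec_update_not, sub_dotProduct, hs, single_dotProduct]
    cases h : s i <;> simpa [signVec, h] using hi
  have hdisj : Disjoint Z (Z.image flip) := by
    rw [disjoint_left]
    rintro s hs hs'
    obtain ⟨t, ht, rfl⟩ := mem_image.1 hs'
    exact hflip t ht hs
  have hdens : Z.dens + Z.dens ≤ 1 := by
    nth_rewrite 2 [← dens_image hinv.bijective]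
    rw [← dens_union_of_disjoint hdisj]
    exact dens_le_one
  have hdens' : (Z.dens : ℝ) + Z.dens ≤ 1 := by exact_mod_cast hdens
  calc signProb u = Z.dens := by unfold signProb; rw [hZ]
    _ ≤ 1 / 2 := by linarith

end signProb

section fourier

lemma addChar_sum {G M ι : Type*} [AddCommMonoid G] [CommMonoid M] (ψ : AddChar G M)
    (s : Finset ι) (f : ι → G) : ψ (∑ i ∈ s, f i) = ∏ i ∈ s, ψ (f i) := by
  induction s using Finset.cons_induction with
  | empty => simp
  | cons i s hi ih => rw [sum_cons, prod_cons, AddChar.map_add_eq_mul, ih]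

lemma isUnit_two_of_odd {q : ℕ} (hq : Odd q) : IsUnit (2 : ZMod q) := by
  exact_mod_cast (ZMod.isUnit_iff_coprime 2 q).2 (Nat.coprime_two_left.2 hq)

variable {q : ℕ} [NeZero q] {ι κ : Type*} [Fintype ι] [Fintype κ]

/-- The cosine `cos (2πx/q)`, as the real part of the standard additive character of `ZMod q`. -/
noncomputable def charCos (x : ZMod q) : ℝ := (ZMod.stdAddChar x).re

lemma abs_charCos_le_one (x : ZMod q) : |charCos x| ≤ 1 :=
  (Complex.abs_re_le_norm _).trans (AddChar.norm_apply _ x).le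

lemma charCos_zero : charCos (0 : ZMod q) = 1 := by simp [charCos]

lemma two_mul_charCos (x : ZMod q) :
    (2 * charCos x : ℂ) = ZMod.stdAddChar x + ZMod.stdAddChar (-x) := by
  rw [AddChar.map_neg_eq_conj, Complex.add_conj, charCos]
  push_cast
  rfl

lemma charCos_two_mul (x : ZMod q) : charCos (2 * x) = 2 * charCos x ^ 2 - 1 := by
  have hnorm := Complex.sq_norm_sub_sq_re (ZMod.stdAddChar x)
  rw [AddChar.norm_apply] at hnorm
  rw [charCos, charCos, two_mul, AddChar.map_add_eq_mul, Complex.mul_re]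
  linear_combination hnorm

lemma abs_charCos_le (x : ZMod q) : |charCos x| ≤ 3 / 4 + charCos (2 * x) / 4 := by
  rw [charCos_two_mul, ← sq_abs]
  nlinarith [sq_nonneg (|charCos x| - 1)]

open scoped Classical in
lemma two_pow_mul_prod_charCos (u : ι → ZMod q) :
    2 ^ Fintype.card ι * ∏ i, (charCos (u i) : ℂ) =
      ∑ s, ZMod.stdAddChar (signVec (ZMod q) s ⬝ᵥ u) := by
  have hterm (i : ι) : (2 * charCos (u i) : ℂ) =
      ∑ s : Bool, ZMod.stdAddChar ((if s then 1 else -1) * u i) := by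
    simp [two_mul_charCos]
  rw [← card_univ, ← prod_const, ← prod_mul_distrib, prod_congr rfl fun i _ => hterm i,
    Fintype.prod_sum]
  exact sum_congr rfl fun s _ => (addChar_sum _ _ _).symm

lemma signProb_eq_sum_prod_charCos (u : ι → ZMod q) :
    signProb u = (∑ ξ, ∏ i, charCos (u i * ξ)) / q := by
  classical
  have hzero (x : ZMod q) : ∑ ξ, ZMod.stdAddChar (ξ * x) = if x = 0 then (q : ℂ) else 0 := by
    rw [AddChar.sum_mulShift x (ZMod.isPrimitive_stdAddChar q)]
    simp [ZMod.card]
  have hsum : 2 ^ Fintype.card ι * ∑ ξ, ∏ i, (charCos (u i * ξ) : ℂ) =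
      q * #{s | signVec (ZMod q) s ⬝ᵥ u = 0} := by
    calc 2 ^ Fintype.card ι * ∑ ξ, ∏ i, (charCos (u i * ξ) : ℂ)
        = ∑ ξ, ∑ s, ZMod.stdAddChar (signVec (ZMod q) s ⬝ᵥ fun i => u i * ξ) := by
          rw [mul_sum]
          exact sum_congr rfl fun ξ _ => two_pow_mul_prod_charCos _
      _ = ∑ s, ∑ ξ, ZMod.stdAddChar (ξ * (signVec (ZMod q) s ⬝ᵥ u)) := by
          rw [sum_comm]
          simp only [dotProduct, mul_sum, mul_left_comm, mul_comm]
      _ = _ := by simp [hzero, ← sum_filter, mul_comm]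
  have hsum' : 2 ^ Fintype.card ι * ∑ ξ, ∏ i, charCos (u i * ξ) =
      q * #{s | signVec (ZMod q) s ⬝ᵥ u = 0} := by exact_mod_cast hsum
  have hq : (q : ℝ) ≠ 0 := NeZero.ne _
  rw [signProb, nnratCast_dens]
  simp only [Fintype.card_fun, Fintype.card_bool]
  push_cast
  rw [div_eq_div_iff (by positivity) hq]
  rw [mul_comm (∑ ξ, _), hsum', mul_comm]
  congr!

/-- The modulus of the `ξ`-th Fourier coefficient of a random signed sum of the entries of `u`. -/
noncomputable def charWeight (u : ι → ZMod q) (ξ : ZMod q) : ℝ := ∏ i, |charCos (u i * ξ)|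

lemma charWeight_nonneg (u : ι → ZMod q) (ξ : ZMod q) : 0 ≤ charWeight u ξ :=
  prod_nonneg fun _ _ => abs_nonneg _

lemma charWeight_le_one (u : ι → ZMod q) (ξ : ZMod q) : charWeight u ξ ≤ 1 :=
  prod_le_one (fun _ _ => abs_nonneg _) fun _ _ => abs_charCos_le_one _

lemma charWeight_cons {n : ℕ} (a : ZMod q) (u : Fin n → ZMod q) (ξ : ZMod q) :
    charWeight (Fin.cons a u : Fin (n + 1) → ZMod q) ξ = |charCos (a * ξ)| * charWeight u ξ := by
  simp [charWeight, Fin.prod_univ_succ]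

lemma charWeight_comp_equiv (e : κ ≃ ι) (u : ι → ZMod q) (ξ : ZMod q) :
    charWeight (u ∘ e) ξ = charWeight u ξ :=
  e.prod_comp fun i => |charCos (u i * ξ)|

lemma charWeight_subtype_mul (p : ι → Prop) [Fintype {i // p i}] [Fintype {i // ¬ p i}]
    (u : ι → ZMod q) (ξ : ZMod q) :
    charWeight (fun i : {i // p i} => u i) ξ * charWeight (fun i : {i // ¬ p i} => u i) ξ =
      charWeight u ξ := by
  classical
  unfold charWeight
  convert Fintype.prod_subtype_mul_prod_subtype p fun i => |charCos (u i * ξ)|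

lemma signProb_le_sum_charWeight (u : ι → ZMod q) :
    signProb u ≤ (1 + ∑ ξ with ξ ≠ 0, charWeight u ξ) / q := by
  rw [signProb_eq_sum_prod_charCos, ← sum_filter_add_sum_filter_not univ (· = 0), filter_eq',
    if_pos (mem_univ 0), sum_singleton]
  gcongr with ξ
  · simp [charCos_zero]
  · rw [charWeight, ← abs_prod]
    exact le_abs_self _

lemma sum_sq_norm_sum_mul_addChar {R : Type*} [CommRing R] [Fintype R] {ψ : AddChar R ℂ}
    (hψ : ψ.IsPrimitive) (W : R → ℂ) :
    ∑ a, ‖∑ ξ, W ξ * ψ (a * ξ)‖ ^ 2 = Fintype.card R * ∑ ξ, ‖W ξ‖ ^ 2 := by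
  classical
  have hexpand (a : R) : (‖∑ ξ, W ξ * ψ (a * ξ)‖ ^ 2 : ℂ) =
      ∑ ξ, ∑ ζ, W ξ * star (W ζ) * ψ (a * (ξ - ζ)) := by
    rw [← Complex.mul_conj', map_sum, sum_mul_sum]
    refine sum_congr rfl fun ξ _ => sum_congr rfl fun ζ _ => ?_
    rw [map_mul (starRingEnd ℂ), ← AddChar.map_neg_eq_conj, mul_sub, sub_eq_add_neg,
      AddChar.map_add_eq_mul]
    exact mul_mul_mul_comm _ _ _ _
  have hsum : (∑ a, ‖∑ ξ, W ξ * ψ (a * ξ)‖ ^ 2 : ℂ) = Fintype.card R * ∑ ξ, ‖W ξ‖ ^ 2 := by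
    calc (∑ a, ‖∑ ξ, W ξ * ψ (a * ξ)‖ ^ 2 : ℂ)
        = ∑ ξ, ∑ ζ, W ξ * star (W ζ) * ∑ a, ψ (a * (ξ - ζ)) := by
          simp_rw [hexpand, mul_sum]
          rw [sum_comm]
          exact sum_congr rfl fun ξ _ => sum_comm
      _ = ∑ ξ, W ξ * star (W ξ) * Fintype.card R := by
          simp [AddChar.sum_mulShift _ hψ, sub_eq_zero]
      _ = _ := by
          rw [← sum_mul, mul_comm]
          simp [Complex.mul_conj']
  exact_mod_cast hsum

lemma sum_sq_sum_mul_charCos_le (hq : Odd q) (W : ZMod q → ℝ) :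
    ∑ a : ZMod q, (∑ ξ, W ξ * charCos (2 * (a * ξ))) ^ 2 ≤ q * ∑ ξ, W ξ ^ 2 := by
  have hle (a : ZMod q) : (∑ ξ, W ξ * charCos (a * ξ)) ^ 2 ≤
      ‖∑ ξ, (W ξ : ℂ) * ZMod.stdAddChar (a * ξ)‖ ^ 2 := by
    have hre : ∑ ξ, W ξ * charCos (a * ξ) =
        (∑ ξ, (W ξ : ℂ) * ZMod.stdAddChar (a * ξ)).re := by
      simp [Complex.re_sum, charCos]
    rw [hre, ← sq_abs]
    gcongr
    exact Complex.abs_re_le_norm _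
  calc ∑ a : ZMod q, (∑ ξ, W ξ * charCos (2 * (a * ξ))) ^ 2
      = ∑ a, (∑ ξ, W ξ * charCos (a * ξ)) ^ 2 := by
        simp_rw [← mul_assoc]
        exact Equiv.sum_comp (isUnit_two_of_odd hq).unit.mulLeft
          fun a => (∑ ξ, W ξ * charCos (a * ξ)) ^ 2
    _ ≤ ∑ a, ‖∑ ξ, (W ξ : ℂ) * ZMod.stdAddChar (a * ξ)‖ ^ 2 := sum_le_sum fun a _ => hle a
    _ = q * ∑ ξ, W ξ ^ 2 := by
        rw [sum_sq_norm_sum_mul_addChar (ZMod.isPrimitive_stdAddChar q), ZMod.card]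
        simp

end fourier

section smoothing

variable {q : ℕ} [NeZero q] {k : ℕ} {δ : ℝ} {W : ZMod q → ℝ}

/-- Since `|cos t| ≤ 3/4 + cos (2t) / 4`, either the `ξ`-average of `cos (2t)` is at least `1/8` or
that of `|cos t|` is at most `25/32 = 3/4 + 1/32`. -/
lemma pow_sum_mul_abs_charCos_le (k : ℕ) (hW : ∀ ξ, 0 ≤ W ξ) (hS : 0 < ∑ ξ, W ξ) (a : ZMod q) :
    (∑ ξ, W ξ * |charCos (a * ξ)|) ^ k ≤
      ((25 / 32) ^ k + 64 * ((∑ ξ, W ξ * charCos (2 * (a * ξ))) ^ 2 / (∑ ξ, W ξ) ^ 2)) *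
        (∑ ξ, W ξ) ^ k := by
  set S := ∑ ξ, W ξ with hSdef
  set R := ∑ ξ, W ξ * charCos (2 * (a * ξ)) with hRdef
  have hnonneg : 0 ≤ ∑ ξ, W ξ * |charCos (a * ξ)| :=
    sum_nonneg fun ξ _ => mul_nonneg (hW ξ) (abs_nonneg _)
  have hstep : ∑ ξ, W ξ * |charCos (a * ξ)| ≤ 3 / 4 * S + R / 4 := by
    rw [hSdef, hRdef, mul_sum, sum_div, ← sum_add_distrib]
    refine sum_le_sum fun ξ _ => ?_
    calc W ξ * |charCos (a * ξ)| ≤ W ξ * (3 / 4 + charCos (2 * (a * ξ)) / 4) :=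
          mul_le_mul_of_nonneg_left (abs_charCos_le _) (hW ξ)
      _ = 3 / 4 * W ξ + W ξ * charCos (2 * (a * ξ)) / 4 := by ring
  rcases le_or_gt R (S / 8) with hR | hR
  · calc (∑ ξ, W ξ * |charCos (a * ξ)|) ^ k ≤ (25 / 32 * S) ^ k :=
          pow_le_pow_left₀ hnonneg (by linarith) k
      _ = (25 / 32) ^ k * S ^ k := mul_pow _ _ _
      _ ≤ _ := by
        gcongr
        exact le_add_of_nonneg_right (by positivity)
  · have hone : 1 ≤ 64 * (R ^ 2 / S ^ 2) := by
      rw [← mul_div_assoc, le_div_iff₀ (by positivity)]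
      nlinarith
    calc (∑ ξ, W ξ * |charCos (a * ξ)|) ^ k ≤ S ^ k :=
          pow_le_pow_left₀ hnonneg (sum_le_sum fun ξ _ =>
            mul_le_of_le_one_right (hW ξ) (abs_charCos_le_one _)) k
      _ = 1 * S ^ k := (one_mul _).symm
      _ ≤ _ := by
        gcongr
        exact hone.trans (le_add_of_nonneg_left (by positivity))

lemma sum_pow_sum_mul_abs_charCos_le (hq : Odd q) (k : ℕ) (hW : ∀ ξ, 0 ≤ W ξ)
    (hWδ : ∀ ξ, W ξ ≤ δ) (hS : 1 ≤ ∑ ξ, W ξ) :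
    ∑ a : ZMod q, (∑ ξ, W ξ * |charCos (a * ξ)|) ^ k ≤
      ((25 / 32) ^ k + 64 * δ) * q * (∑ ξ, W ξ) ^ k := by
  have hδ : 0 ≤ δ := (hW 0).trans (hWδ 0)
  set S := ∑ ξ, W ξ
  set R : ZMod q → ℝ := fun a => ∑ ξ, W ξ * charCos (2 * (a * ξ))
  have hsq : ∑ ξ, W ξ ^ 2 ≤ δ * S ^ 2 := by
    calc ∑ ξ, W ξ ^ 2 ≤ ∑ ξ, δ * W ξ :=
          sum_le_sum fun ξ _ => (sq (W ξ)).trans_le (mul_le_mul_of_nonneg_right (hWδ ξ) (hW ξ))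
      _ = δ * S := by rw [mul_sum]
      _ ≤ δ * S ^ 2 := by
        gcongr
        exact le_self_pow₀ hS two_ne_zero
  have hR : (∑ a, R a ^ 2) / S ^ 2 ≤ q * δ := by
    rw [div_le_iff₀ (by positivity), mul_assoc]
    exact (sum_sq_sum_mul_charCos_le hq W).trans (by gcongr)
  calc ∑ a : ZMod q, (∑ ξ, W ξ * |charCos (a * ξ)|) ^ k
      ≤ ∑ a : ZMod q, ((25 / 32) ^ k + 64 * (R a ^ 2 / S ^ 2)) * S ^ k :=
        sum_le_sum fun a _ => pow_sum_mul_abs_charCos_le k hW (by linarith) a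
    _ = (q * (25 / 32) ^ k + 64 * ((∑ a, R a ^ 2) / S ^ 2)) * S ^ k := by
        rw [← sum_mul, sum_add_distrib, ← mul_sum, ← sum_div, sum_const, card_univ, ZMod.card,
          nsmul_eq_mul]
    _ ≤ _ := by
        gcongr
        linarith

lemma sum_mul_charWeight_le {ι : Type*} [Fintype ι] (hW : ∀ ξ, 0 ≤ W ξ) (a : ι → ZMod q) :
    ∑ ξ, W ξ * charWeight a ξ ≤ ∑ ξ, W ξ :=
  sum_le_sum fun ξ _ => mul_le_of_le_one_right (hW ξ) (charWeight_le_one a ξ)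

open scoped Classical in
lemma card_fin_one_lt_sum_mul_charWeight_le (hq : Odd q) (k n : ℕ) (hW : ∀ ξ, 0 ≤ W ξ)
    (hWδ : ∀ ξ, W ξ ≤ δ) :
    (#{a : Fin n → ZMod q | 1 < ∑ ξ, W ξ * charWeight a ξ} : ℝ) ≤
      (((25 / 32) ^ k + 64 * δ) * q) ^ n * (∑ ξ, W ξ) ^ k := by
  have hδ : 0 ≤ δ := (hW 0).trans (hWδ 0)
  induction n generalizing W with
  | zero =>
    have hsum : 0 ≤ ∑ ξ, W ξ := sum_nonneg fun ξ _ => hW ξ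
    by_cases hS : 1 < ∑ ξ, W ξ
    · simpa [charWeight, hS] using one_le_pow₀ hS.le
    · simpa [charWeight, hS] using pow_nonneg hsum k
  | succ n ih =>
    rcases le_or_gt (∑ ξ, W ξ) 1 with hS | hS
    · have hempty (a : Fin (n + 1) → ZMod q) : ¬ 1 < ∑ ξ, W ξ * charWeight a ξ :=
        not_lt.2 ((sum_mul_charWeight_le hW a).trans hS)
      have hsum : 0 ≤ ∑ ξ, W ξ := sum_nonneg fun ξ _ => hW ξ
      simp only [hempty, filter_false, card_empty, Nat.cast_zero]
      positivity
    have hcond : #{a : Fin (n + 1) → ZMod q | 1 < ∑ ξ, W ξ * charWeight a ξ} =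
        ∑ x, #{a : Fin n → ZMod q | 1 < ∑ ξ, W ξ * |charCos (x * ξ)| * charWeight a ξ} := by
      rw [← card_filter_prod]
      refine card_equiv (Fin.consEquiv fun _ => ZMod q).symm fun a => ?_
      obtain ⟨⟨x, a⟩, rfl⟩ := (Fin.consEquiv fun _ => ZMod q).surjective a
      simp [Fin.consEquiv, charWeight_cons, mul_assoc]
    rw [hcond, Nat.cast_sum]
    calc _ ≤ ∑ x : ZMod q, (((25 / 32) ^ k + 64 * δ) * q) ^ n *
            (∑ ξ, W ξ * |charCos (x * ξ)|) ^ k :=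
          sum_le_sum fun x _ => ih (fun ξ => mul_nonneg (hW ξ) (abs_nonneg _)) fun ξ =>
            (mul_le_of_le_one_right (hW ξ) (abs_charCos_le_one _)).trans (hWδ ξ)
      _ ≤ (((25 / 32) ^ k + 64 * δ) * q) ^ n *
            (((25 / 32) ^ k + 64 * δ) * q * (∑ ξ, W ξ) ^ k) := by
          rw [← mul_sum]
          gcongr
          exact sum_pow_sum_mul_abs_charCos_le hq k hW hWδ hS.le
      _ = _ := by ring

open scoped Classical in
lemma card_one_lt_sum_mul_charWeight_le {ι : Type*} [Fintype ι] [DecidableEq ι] (hq : Odd q)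
    (k : ℕ) (hW : ∀ ξ, 0 ≤ W ξ) (hWδ : ∀ ξ, W ξ ≤ δ) :
    (#{a : ι → ZMod q | 1 < ∑ ξ, W ξ * charWeight a ξ} : ℝ) ≤
      (((25 / 32) ^ k + 64 * δ) * q) ^ Fintype.card ι * (∑ ξ, W ξ) ^ k := by
  let e := Fintype.equivFin ι
  have hcard : #{a : ι → ZMod q | 1 < ∑ ξ, W ξ * charWeight a ξ} =
      #{a : Fin (Fintype.card ι) → ZMod q | 1 < ∑ ξ, W ξ * charWeight a ξ} :=
    card_equiv (e.arrowCongr (Equiv.refl _)) fun a => by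
      simp [Equiv.arrowCongr, charWeight_comp_equiv]
  rw [hcard]
  exact card_fin_one_lt_sum_mul_charWeight_le hq k _ hW hWδ

end smoothing

section equidistribution

variable {q : ℕ} [NeZero q]

lemma charCos_eq_cos (x : ZMod q) : charCos x = Real.cos (2 * π * x.valMinAbs / q) := by
  rw [charCos, ← x.coe_valMinAbs, ZMod.stdAddChar_coe, x.coe_valMinAbs,
    ← Complex.exp_ofReal_mul_I_re]
  congr 3
  push_cast
  ring

lemma charCos_le (x : ZMod q) : charCos x ≤ 1 - 8 * (x.valMinAbs / q : ℝ) ^ 2 := by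
  have hq : (0 : ℝ) < q := by exact_mod_cast NeZero.pos q
  have hx : |(x.valMinAbs : ℝ)| ≤ q / 2 := by
    rw [← Int.cast_abs, Int.abs_eq_natAbs, Int.cast_natCast]
    exact (Nat.cast_le.2 x.natAbs_valMinAbs_le).trans Nat.cast_div_le
  have hangle : |2 * π * x.valMinAbs / q| ≤ π := by
    rw [abs_div, abs_mul, abs_of_pos two_pi_pos, abs_of_pos hq, div_le_iff₀ hq]
    nlinarith [pi_pos]
  calc charCos x ≤ 1 - 2 / π ^ 2 * (2 * π * x.valMinAbs / q) ^ 2 :=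
        (charCos_eq_cos x).trans_le (cos_le_one_sub_mul_cos_sq hangle)
    _ = _ := by
        field_simp
        ring

lemma abs_charCos_le_one_sub_sq (x : ZMod q) :
    |charCos x| ≤ 1 - 2 * ((2 * x).valMinAbs / q : ℝ) ^ 2 := by
  linarith [abs_charCos_le x, charCos_le (2 * x)]

lemma card_mul_eq_le_gcd (ξ y : ZMod q) : #{u | u * ξ = y} ≤ ξ.val.gcd q := by
  set d := ξ.val.gcd q
  have hbezout : (d : ZMod q) = ξ * (ξ.val.gcdA q : ℤ) := by
    have := congrArg (Int.cast : ℤ → ZMod q) (Nat.gcd_eq_gcd_ab ξ.val q)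
    simpa using this
  have htorsion : #{u : ZMod q | d • u = 0} ≤ d :=
    IsAddCyclic.card_nsmul_eq_zero_le (Nat.gcd_pos_of_pos_right _ (NeZero.pos q))
  rcases ({u | u * ξ = y} : Finset (ZMod q)).eq_empty_or_nonempty with h | ⟨u₀, hu₀⟩
  · simp [h]
  rw [mem_filter_univ] at hu₀
  refine (card_le_card_of_injOn (· - u₀) (fun u hu => ?_) fun u _ v _ => sub_left_inj.1).trans
    htorsion
  have hu : u * ξ = y := by simpa using hu
  simp only [coe_filter_univ, Set.mem_ofPred_eq, nsmul_eq_mul]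
  linear_combination (u - u₀) * hbezout + (ξ.val.gcdA q : ZMod q) * (hu - hu₀)

lemma gcd_dvd_valMinAbs_mul (u ξ : ZMod q) : (ξ.val.gcd q : ℤ) ∣ (u * ξ).valMinAbs := by
  have hmod : (u * ξ).valMinAbs ≡ u.val * ξ.val [ZMOD q] := by
    rw [← ZMod.intCast_eq_intCast_iff]
    simp
  refine (hmod.of_dvd ?_).dvd_iff.2 ?_
  · exact_mod_cast Nat.gcd_dvd_right _ _
  · exact_mod_cast (Nat.gcd_dvd_left _ _).mul_left _

/-- The products `u * ξ` are the multiples of `d = gcd(ξ, q)`, each attained `d` times. -/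
lemma card_valMinAbs_mul_le (ξ : ZMod q) {θ : ℝ} (hθ : 0 ≤ θ) :
    (#{u | u * ξ ≠ 0 ∧ |((u * ξ).valMinAbs : ℝ)| ≤ θ * q} : ℝ) ≤ 2 * θ * q := by
  set A : Finset (ZMod q) := {u | u * ξ ≠ 0 ∧ |((u * ξ).valMinAbs : ℝ)| ≤ θ * q}
  set d := ξ.val.gcd q
  have hd : 0 < d := Nat.gcd_pos_of_pos_right _ (NeZero.pos q)
  set m := ⌊θ * q / d⌋₊
  set T : Finset ℤ := (Icc (-m : ℤ) m).erase 0
  have hT : #T = 2 * m := by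
    rw [card_erase_of_mem (by simp), Int.card_Icc]
    omega
  have hmaps : ∀ u ∈ A, (u * ξ).valMinAbs / d ∈ T := by
    intro u hu
    obtain ⟨hne, hle⟩ := (mem_filter_univ _).1 hu
    obtain ⟨t, ht⟩ := gcd_dvd_valMinAbs_mul u ξ
    have ht0 : t ≠ 0 := by
      rintro rfl
      exact hne ((ZMod.valMinAbs_eq_zero _).1 (by simpa using ht))
    have htm : t.natAbs ≤ m := by
      refine Nat.le_floor ?_
      rw [le_div_iff₀ (by positivity), mul_comm, Nat.cast_natAbs, Int.cast_abs]
      rw [ht] at hle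
      simpa [abs_mul] using hle
    rw [ht, Int.mul_ediv_cancel_left _ (by exact_mod_cast hd.ne')]
    simp only [T, mem_erase, mem_Icc]
    omega
  have hfiber : ∀ t ∈ T, #{u ∈ A | (u * ξ).valMinAbs / d = t} ≤ d := by
    intro t _
    refine (card_le_card fun u hu => ?_).trans (card_mul_eq_le_gcd ξ (d * t : ℤ))
    rw [mem_filter_univ, ← (mem_filter.1 hu).2, Int.mul_ediv_cancel' (gcd_dvd_valMinAbs_mul u ξ),
      ZMod.coe_valMinAbs]
  calc (#A : ℝ) ≤ d * (2 * m) := by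
        exact_mod_cast hT ▸ card_le_mul_card_image_of_maps_to hmaps d hfiber
    _ ≤ d * (2 * (θ * q / d)) := by
        gcongr
        exact Nat.floor_le (by positivity)
    _ = 2 * θ * q := by field_simp

lemma sum_pow_abs_charCos_mul_le (hq : Odd q) (l : ℕ) (ξ : ZMod q) {θ : ℝ} (hθ : 0 ≤ θ)
    (hθ' : θ ≤ 1 / 2) :
    ∑ u with u * ξ ≠ 0, |charCos (u * ξ)| ^ l ≤ (2 * θ + (1 - 2 * θ ^ 2) ^ l) * q := by
  have hq0 : (0 : ℝ) < q := by exact_mod_cast NeZero.pos q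
  have hpow : 0 ≤ (1 - 2 * θ ^ 2) ^ l := pow_nonneg (by nlinarith) l
  have hpt (u : ZMod q) : |charCos (u * ξ)| ^ l ≤
      (if |((u * (2 * ξ)).valMinAbs : ℝ)| ≤ θ * q then 1 else 0) + (1 - 2 * θ ^ 2) ^ l := by
    split_ifs with hsmall
    · linarith [pow_le_one₀ (n := l) (abs_nonneg _) (abs_charCos_le_one (u * ξ))]
    · have hlarge : θ ^ 2 ≤ ((2 * (u * ξ)).valMinAbs / q : ℝ) ^ 2 := by
        rw [sq_le_sq, abs_of_nonneg hθ, abs_div, abs_of_pos hq0, le_div_iff₀ hq0, mul_left_comm]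
        exact (not_le.1 hsmall).le
      rw [zero_add]
      gcongr
      linarith [abs_charCos_le_one_sub_sq (u * ξ)]
  have hne (u : ZMod q) : u * ξ ≠ 0 ↔ u * (2 * ξ) ≠ 0 := by
    rw [mul_left_comm, Ne, Ne, (isUnit_two_of_odd hq).mul_right_eq_zero]
  calc ∑ u with u * ξ ≠ 0, |charCos (u * ξ)| ^ l
      ≤ ∑ u with u * ξ ≠ 0, ((if |((u * (2 * ξ)).valMinAbs : ℝ)| ≤ θ * q then 1 else 0) +
          (1 - 2 * θ ^ 2) ^ l) := sum_le_sum fun u _ => hpt u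
    _ = #{u | u * (2 * ξ) ≠ 0 ∧ |((u * (2 * ξ)).valMinAbs : ℝ)| ≤ θ * q} +
          #{u | u * ξ ≠ 0} * (1 - 2 * θ ^ 2) ^ l := by
        simp_rw [hne, sum_add_distrib, sum_boole, filter_filter, sum_const, nsmul_eq_mul]
    _ ≤ 2 * θ * q + q * (1 - 2 * θ ^ 2) ^ l := by
        gcongr
        · exact card_valMinAbs_mul_le _ hθ
        · exact (card_le_univ _).trans_eq (ZMod.card q)
    _ = _ := by ring

lemma exists_sum_pow_abs_charCos_mul_le {c : ℝ} (hc : 0 < c) :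
    ∃ l : ℕ, ∀ (q : ℕ) [NeZero q], Odd q → ∀ ξ : ZMod q,
      ∑ u with u * ξ ≠ 0, |charCos (u * ξ)| ^ l ≤ c * q := by
  set θ := min (c / 4) (1 / 2)
  have hθ : 0 < θ := by positivity
  have hθc : θ ≤ c / 4 := min_le_left _ _
  have hθ' : θ ≤ 1 / 2 := min_le_right _ _
  obtain ⟨l, hl⟩ := exists_pow_lt_of_lt_one (half_pos hc) (show 1 - 2 * θ ^ 2 < 1 by nlinarith)
  refine ⟨l, fun q _ hq ξ => (sum_pow_abs_charCos_mul_le hq l ξ hθ.le hθ').trans ?_⟩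
  gcongr
  linarith

end equidistribution

section counting

variable {q : ℕ} [NeZero q] {ι κ : Type*} [Fintype ι] [Fintype κ] {c δ : ℝ} {l : ℕ}

lemma one_lt_sum_charWeight {u : ι → ZMod q} (hu : 2 / q < signProb u) :
    1 < ∑ ξ with ξ ≠ 0, charWeight u ξ := by
  have hq : (0 : ℝ) < q := by exact_mod_cast NeZero.pos q
  have := (div_lt_div_iff_of_pos_right hq).1 (hu.trans_le (signProb_le_sum_charWeight u))
  linarith

variable [DecidableEq ι]

open scoped Classical in
lemma card_lt_charWeight_le (hδ : 0 < δ) (ξ : ZMod q)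
    (hc : ∑ u with u * ξ ≠ 0, |charCos (u * ξ)| ^ l ≤ c * q) :
    (#{b : ι → ZMod q | (∀ i, b i * ξ ≠ 0) ∧ δ < charWeight b ξ} : ℝ) ≤
      (c * q) ^ Fintype.card ι / δ ^ l := by
  set U : Finset (ι → ZMod q) := Fintype.piFinset fun _ => {u | u * ξ ≠ 0}
  have hmarkov : (#{b : ι → ZMod q | (∀ i, b i * ξ ≠ 0) ∧ δ < charWeight b ξ} : ℝ) * δ ^ l ≤
      ∑ b ∈ U, charWeight b ξ ^ l := by
    rw [← nsmul_eq_mul, ← sum_const]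
    refine (sum_le_sum fun b hb => ?_).trans <| sum_le_sum_of_subset_of_nonneg (fun b hb => ?_)
      fun b _ _ => pow_nonneg (charWeight_nonneg b ξ) l
    · exact pow_le_pow_left₀ hδ.le ((mem_filter_univ _).1 hb).2.le l
    · simpa [U] using ((mem_filter_univ _).1 hb).1
  have hprod : ∑ b ∈ U, charWeight b ξ ^ l =
      (∑ u with u * ξ ≠ 0, |charCos (u * ξ)| ^ l) ^ Fintype.card ι := by
    simp_rw [charWeight, ← prod_pow]
    rw [sum_prod_piFinset _ fun _ u => |charCos (u * ξ)| ^ l, prod_const, card_univ]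
  rw [le_div_iff₀ (by positivity)]
  exact (hmarkov.trans_eq hprod).trans (by gcongr)

open scoped Classical in
lemma card_exists_lt_charWeight_le (hδ : 0 < δ)
    (hc : ∀ ξ : ZMod q, ∑ u with u * ξ ≠ 0, |charCos (u * ξ)| ^ l ≤ c * q) :
    (#{b : ι → ZMod q | ∃ ξ, (∀ i, b i * ξ ≠ 0) ∧ δ < charWeight b ξ} : ℝ) ≤
      q * ((c * q) ^ Fintype.card ι / δ ^ l) := by
  have hunion : ({b : ι → ZMod q | ∃ ξ, (∀ i, b i * ξ ≠ 0) ∧ δ < charWeight b ξ} : Finset _) =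
      univ.biUnion fun ξ => {b | (∀ i, b i * ξ ≠ 0) ∧ δ < charWeight b ξ} := by
    ext
    simp
  calc (#{b : ι → ZMod q | ∃ ξ, (∀ i, b i * ξ ≠ 0) ∧ δ < charWeight b ξ} : ℝ)
      ≤ ∑ ξ, (#{b : ι → ZMod q | (∀ i, b i * ξ ≠ 0) ∧ δ < charWeight b ξ} : ℝ) := by
        rw [hunion]
        exact_mod_cast card_biUnion_le
    _ ≤ ∑ _ξ : ZMod q, (c * q) ^ Fintype.card ι / δ ^ l :=
        sum_le_sum fun ξ _ => card_lt_charWeight_le hδ ξ (hc ξ)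
    _ = _ := by rw [sum_const, card_univ, ZMod.card, nsmul_eq_mul]

open scoped Classical in
lemma card_one_lt_sum_charWeight_mul_le (hq : Odd q) (k : ℕ) (hδ : 0 ≤ δ) (b : κ → ZMod q)
    (hb : ∀ ξ ≠ 0, charWeight b ξ ≤ δ) :
    (#{a : ι → ZMod q | 1 < ∑ ξ with ξ ≠ 0, charWeight b ξ * charWeight a ξ} : ℝ) ≤
      (((25 / 32) ^ k + 64 * δ) * q) ^ Fintype.card ι * q ^ k := by
  set W : ZMod q → ℝ := fun ξ => if ξ ≠ 0 then charWeight b ξ else 0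
  have hW0 (ξ) : 0 ≤ W ξ := by
    simp only [W]
    split_ifs
    exacts [charWeight_nonneg b ξ, le_rfl]
  have hWδ (ξ) : W ξ ≤ δ := by
    simp only [W]
    split_ifs with hξ
    exacts [hb ξ hξ, hδ]
  have hWsum : ∑ ξ, W ξ ≤ q := by
    calc ∑ ξ, W ξ = ∑ ξ with ξ ≠ 0, charWeight b ξ := (sum_filter _ _).symm
      _ ≤ ∑ ξ with ξ ≠ 0, 1 := sum_le_sum fun ξ _ => charWeight_le_one b ξ
      _ ≤ q := by
        rw [sum_const, nsmul_one]
        exact_mod_cast (card_le_univ _).trans_eq (ZMod.card q)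
  have hsum (a : ι → ZMod q) : ∑ ξ with ξ ≠ 0, charWeight b ξ * charWeight a ξ =
      ∑ ξ, W ξ * charWeight a ξ := by
    simp_rw [W, sum_filter, ite_mul, zero_mul]
  simp_rw [hsum]
  refine (card_one_lt_sum_mul_charWeight_le hq k hW0 hWδ).trans ?_
  gcongr
  exact sum_nonneg fun ξ _ => hW0 ξ

open scoped Classical in
lemma card_isUnit_and_one_lt_sum_charWeight_mul_le (hq : Odd q) (k : ℕ) (hδ : 0 ≤ δ)
    (b : κ → ZMod q) (hb : ¬ ∃ ξ, (∀ i, b i * ξ ≠ 0) ∧ δ < charWeight b ξ) :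
    (#{a : ι → ZMod q | (∀ i, IsUnit (b i)) ∧
        1 < ∑ ξ with ξ ≠ 0, charWeight b ξ * charWeight a ξ} : ℝ) ≤
      (((25 / 32) ^ k + 64 * δ) * q) ^ Fintype.card ι * q ^ k := by
  by_cases hunit : ∀ i, IsUnit (b i)
  · simp only [hunit, implies_true, true_and]
    refine card_one_lt_sum_charWeight_mul_le hq k hδ b fun ξ hξ => ?_
    by_contra! hlt
    exact hb ⟨ξ, fun i => (hunit i).mul_right_eq_zero.not.2 hξ, hlt⟩
  · simp only [hunit, false_and, filter_false, card_empty, Nat.cast_zero]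
    positivity

open scoped Classical in
/-- Markov's inequality discards the vectors `x.1` with a large nontrivial Fourier coefficient, and
smoothing by the coordinates of `x.2` handles the others. -/
lemma card_prod_isUnit_and_one_lt_sum_charWeight_mul_le [DecidableEq κ] (hq : Odd q) (k : ℕ)
    (hδ : 0 < δ) (hc : ∀ ξ : ZMod q, ∑ u with u * ξ ≠ 0, |charCos (u * ξ)| ^ l ≤ c * q) :
    (#{x : (κ → ZMod q) × (ι → ZMod q) | (∀ i, IsUnit (x.1 i)) ∧
        1 < ∑ ξ with ξ ≠ 0, charWeight x.1 ξ * charWeight x.2 ξ} : ℝ) ≤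
      q ^ Fintype.card κ * q ^ Fintype.card ι * (q * (c ^ Fintype.card κ / δ ^ l) +
        ((25 / 32) ^ k + 64 * δ) ^ Fintype.card ι * q ^ k) := by
  have hfiber := card_filter_prod_le
    (fun b : κ → ZMod q => ∃ ξ, (∀ i, b i * ξ ≠ 0) ∧ δ < charWeight b ξ)
    (fun (b : κ → ZMod q) (a : ι → ZMod q) => (∀ i, IsUnit (b i)) ∧
      1 < ∑ ξ with ξ ≠ 0, charWeight b ξ * charWeight a ξ)
    (by positivity : (0 : ℝ) ≤ (((25 / 32) ^ k + 64 * δ) * q) ^ Fintype.card ι * q ^ k)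
    (card_isUnit_and_one_lt_sum_charWeight_mul_le hq k hδ.le)
  rw [Fintype.card_fun, Fintype.card_fun, ZMod.card, Nat.cast_pow, Nat.cast_pow] at hfiber
  calc _ ≤ #{b : κ → ZMod q | ∃ ξ, (∀ i, b i * ξ ≠ 0) ∧ δ < charWeight b ξ} *
            (q : ℝ) ^ Fintype.card ι + q ^ Fintype.card κ *
              ((((25 / 32) ^ k + 64 * δ) * q) ^ Fintype.card ι * q ^ k) := hfiber
    _ ≤ q * ((c * q) ^ Fintype.card κ / δ ^ l) * q ^ Fintype.card ι +
          q ^ Fintype.card κ * ((((25 / 32) ^ k + 64 * δ) * q) ^ Fintype.card ι * q ^ k) := by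
        gcongr
        exact card_exists_lt_charWeight_le hδ hc
    _ = _ := by
        rw [mul_pow, mul_pow]
        ring

open scoped Classical in
lemma card_isUnit_on_and_two_div_lt_signProb_le (hq : Odd q) (k : ℕ) (hδ : 0 < δ)
    (hc : ∀ ξ : ZMod q, ∑ u with u * ξ ≠ 0, |charCos (u * ξ)| ^ l ≤ c * q) (I : Finset ι) :
    (#{u : ι → ZMod q | (∀ i ∈ I, IsUnit (u i)) ∧ 2 / q < signProb u} : ℝ) ≤
      q ^ Fintype.card ι * (q * (c ^ #I / δ ^ l) +
        ((25 / 32) ^ k + 64 * δ) ^ (Fintype.card ι - #I) * q ^ k) := by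
  have hcompl : Fintype.card {i // i ∉ I} = Fintype.card ι - #I := by
    rw [Fintype.card_subtype_compl, Fintype.card_coe]
  have hpow : (q : ℝ) ^ #I * q ^ (Fintype.card ι - #I) = q ^ Fintype.card ι := by
    rw [← pow_add, Nat.add_sub_cancel' (card_le_univ I)]
  have hcount := card_prod_isUnit_and_one_lt_sum_charWeight_mul_le (κ := {i // i ∈ I})
    (ι := {i // i ∉ I}) hq k hδ hc
  rw [hcompl, Fintype.card_coe, hpow] at hcount
  refine hcount.trans' (Nat.cast_le.2 ?_)
  refine card_le_card_of_injOn (Equiv.piEquivPiSubtypeProd (· ∈ I) fun _ => ZMod q)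
    (fun u hu => ?_) (Equiv.injective _).injOn
  rw [mem_coe, mem_filter_univ] at hu ⊢
  refine ⟨fun i => hu.1 i i.2, (one_lt_sum_charWeight hu.2).trans_eq ?_⟩
  exact sum_congr rfl fun ξ _ => (charWeight_subtype_mul (· ∈ I) u ξ).symm

end counting

section biasedVectors

variable {q : ℕ} [NeZero q] {ι : Type*} [Fintype ι] [DecidableEq ι] {c δ η x : ℝ} {k l m n : ℕ}

open scoped Classical in
/-- The vectors modulo `q` with at least `m` invertible entries whose random signed sum vanishes
with more than twice the probability `1 / q` of a uniform residue. -/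
noncomputable def biasedVectors (ι : Type*) [Fintype ι] [DecidableEq ι] (q : ℕ) [NeZero q]
    (m : ℕ) : Finset (ι → ZMod q) :=
  {u | m ≤ #{i | IsUnit (u i)} ∧ 2 / q < signProb u}

lemma card_biasedVectors_le (hq : Odd q) (k m : ℕ) (hδ : 0 < δ)
    (hc : ∀ ξ : ZMod q, ∑ u with u * ξ ≠ 0, |charCos (u * ξ)| ^ l ≤ c * q) :
    (#(biasedVectors ι q m) : ℝ) ≤
      2 ^ Fintype.card ι * (q ^ Fintype.card ι * (q * (c ^ m / δ ^ l) +
        ((25 / 32) ^ k + 64 * δ) ^ (Fintype.card ι - m) * q ^ k)) := by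
  classical
  have hc0 : 0 ≤ c := nonneg_of_mul_nonneg_left
    ((sum_nonneg fun u _ => by positivity).trans (hc 0)) (Nat.cast_pos.2 (NeZero.pos q))
  set M : ℝ := q ^ Fintype.card ι * (q * (c ^ m / δ ^ l) +
    ((25 / 32) ^ k + 64 * δ) ^ (Fintype.card ι - m) * q ^ k)
  have hbound (I) (hI : I ∈ powersetCard m (univ : Finset ι)) :
      (#{u : ι → ZMod q | (∀ i ∈ I, IsUnit (u i)) ∧ 2 / q < signProb u} : ℝ) ≤ M := by
    have := card_isUnit_on_and_two_div_lt_signProb_le hq k hδ hc I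
    rwa [(mem_powersetCard.1 hI).2] at this
  have hsub : biasedVectors ι q m ⊆ (powersetCard m univ).biUnion fun I =>
      {u | (∀ i ∈ I, IsUnit (u i)) ∧ 2 / q < signProb u} := fun u hu => by
    obtain ⟨hunit, hprob⟩ := (mem_filter_univ _).1 hu
    obtain ⟨I, hI, hIm⟩ := exists_subset_card_eq hunit
    exact mem_biUnion.2 ⟨I, mem_powersetCard.2 ⟨subset_univ I, hIm⟩,
      (mem_filter_univ _).2 ⟨fun i hi => (mem_filter_univ i).1 (hI hi), hprob⟩⟩
  calc (#(biasedVectors ι q m) : ℝ)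
      ≤ ∑ I ∈ powersetCard m (univ : Finset ι),
          (#{u : ι → ZMod q | (∀ i ∈ I, IsUnit (u i)) ∧ 2 / q < signProb u} : ℝ) := by
        exact_mod_cast (card_le_card hsub).trans card_biUnion_le
    _ ≤ ∑ _I ∈ powersetCard m (univ : Finset ι), M := sum_le_sum hbound
    _ = (Fintype.card ι).choose m * M := by
        rw [sum_const, card_powersetCard, card_univ, nsmul_eq_mul]
    _ ≤ 2 ^ Fintype.card ι * M := by
        gcongr
        exact_mod_cast Nat.choose_le_two_pow _ _

/-- The factor `(100 / 81) ^ k = ((10 / 9) ^ 2) ^ k` offsets the loss `q ^ k` for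
`q ≤ (10 / 9) ^ n` when at least `n / 2` coordinates smooth: moduli can grow only as long as
`25 / 32 * (100 / 81) < 1`. -/
lemma exists_add_mul_mul_pow_le {t : ℝ} (ht : 0 < t) :
    ∃ k : ℕ, ∃ δ : ℝ, 0 < δ ∧ ((25 / 32) ^ k + 64 * δ) * (100 / 81) ^ k ≤ t := by
  obtain ⟨k, hk⟩ := exists_pow_lt_of_lt_one (half_pos ht) (by norm_num : (2500 / 2592 : ℝ) < 1)
  refine ⟨k, t / 2 / ((100 / 81) ^ k * 64), by positivity, ?_⟩
  calc ((25 / 32) ^ k + 64 * (t / 2 / ((100 / 81) ^ k * 64))) * (100 / 81) ^ k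
      = (2500 / 2592) ^ k + t / 2 := by
        rw [add_mul, ← mul_pow]
        norm_num
        field_simp
    _ ≤ t := by linarith

lemma mul_pow_pow_div_pow_le (hη : 0 ≤ η) (hη1 : η ≤ 1) (hx : 0 ≤ x) (hxn : x ≤ 2 ^ n)
    (hm : n ≤ 32 * m) (hδ : 0 ≤ δ) (hδn : 1 / δ ^ l ≤ 2 ^ n) :
    x * (((η / 16) ^ 32) ^ m / δ ^ l) ≤ (η / 4) ^ n := by
  have hm' : ((η / 16) ^ 32) ^ m ≤ (η / 16) ^ n := by
    rw [← pow_mul]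
    exact pow_le_pow_of_le_one (by positivity) (by linarith) hm
  calc x * (((η / 16) ^ 32) ^ m / δ ^ l) = (((η / 16) ^ 32) ^ m * x) * (1 / δ ^ l) := by ring
    _ ≤ ((η / 16) ^ n * 2 ^ n) * 2 ^ n := by gcongr
    _ = (η / 4) ^ n := by
      rw [← mul_pow, ← mul_pow]
      ring

lemma pow_mul_pow_le (hη : 0 ≤ η) (hη1 : η ≤ 1) (hx : 0 ≤ x) (hxn : x ≤ (10 / 9) ^ n)
    (hm : n ≤ 2 * m) (hc : 0 ≤ c) (hck : c * (100 / 81) ^ k ≤ (η / 4) ^ 2) :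
    c ^ m * x ^ k ≤ (η / 4) ^ n := by
  have hxk : x ^ k ≤ ((100 / 81) ^ k) ^ m := by
    calc x ^ k ≤ ((10 / 9) ^ (2 * m)) ^ k := by
          gcongr
          exact hxn.trans (pow_le_pow_right₀ (by norm_num) hm)
      _ = ((100 / 81) ^ k) ^ m := by
          rw [pow_mul, pow_right_comm]
          norm_num
  calc c ^ m * x ^ k ≤ c ^ m * ((100 / 81) ^ k) ^ m := by gcongr
    _ = (c * (100 / 81) ^ k) ^ m := (mul_pow _ _ _).symm
    _ ≤ ((η / 4) ^ 2) ^ m := by gcongr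
    _ = (η / 4) ^ (2 * m) := (pow_mul _ _ _).symm
    _ ≤ (η / 4) ^ n := pow_le_pow_of_le_one (by positivity) (by linarith) hm

lemma eventually_card_biasedVectors_le (hη : 0 < η) (hη1 : η ≤ 1) :
    ∀ᶠ n : ℕ in Filter.atTop, ∀ (q : ℕ) [NeZero q], Odd q → (q : ℝ) ≤ (10 / 9) ^ n →
      (#(biasedVectors (Fin n) q (n / 16)) : ℝ) ≤ (η * q) ^ n := by
  obtain ⟨k, δ, hδ, hkδ⟩ := exists_add_mul_mul_pow_le (t := (η / 4) ^ 2) (by positivity)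
  obtain ⟨l, hl⟩ := exists_sum_pow_abs_charCos_mul_le (c := (η / 16) ^ 32) (by positivity)
  have hδl : ∀ᶠ n : ℕ in Filter.atTop, 1 / δ ^ l ≤ (2 : ℝ) ^ n :=
    (tendsto_pow_atTop_atTop_of_one_lt one_lt_two).eventually_ge_atTop _
  filter_upwards [hδl, Filter.eventually_ge_atTop 32] with n hn hn32 q _ hq hqn
  have hqn2 : (q : ℝ) ≤ 2 ^ n := hqn.trans (by gcongr; norm_num)
  have hcard := card_biasedVectors_le (ι := Fin n) hq k (n / 16) hδ (hl q hq)
  rw [Fintype.card_fin] at hcard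
  calc (#(biasedVectors (Fin n) q (n / 16)) : ℝ)
      ≤ 2 ^ n * (q ^ n * (q * (((η / 16) ^ 32) ^ (n / 16) / δ ^ l) +
          ((25 / 32) ^ k + 64 * δ) ^ (n - n / 16) * q ^ k)) := hcard
    _ ≤ 2 ^ n * (q ^ n * ((η / 4) ^ n + (η / 4) ^ n)) := by
        gcongr
        · exact mul_pow_pow_div_pow_le hη.le hη1 (by positivity) hqn2 (by lia) hδ.le hn
        · exact pow_mul_pow_le hη.le hη1 (by positivity) hqn (by lia) (by positivity) hkδ
    _ = 2 * ((η / 2) * q) ^ n := by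
        have h4 : (η / 2 * q) ^ n = 2 ^ n * (q ^ n * (η / 4) ^ n) := by
          rw [← mul_pow, ← mul_pow]
          ring
        rw [h4]
        ring
    _ ≤ 2 ^ n * ((η / 2) * q) ^ n := by
        gcongr
        exact le_self_pow₀ one_le_two (by lia)
    _ = (η * q) ^ n := by
        rw [← mul_pow]
        ring

end biasedVectors

section sparseVectors

variable {ι α : Type*} [Fintype ι] [DecidableEq ι] [Fintype α] [Zero α] [DecidableEq α]

/-- The nonzero vectors with fewer than `m` nonzero entries. -/
def sparseVectors (ι α : Type*) [Fintype ι] [DecidableEq ι] [Fintype α] [Zero α] [DecidableEq α]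
    (m : ℕ) : Finset (ι → α) :=
  {u | u ≠ 0 ∧ #{i | u i ≠ 0} < m}

lemma card_sparseVectors_le {c : ℝ} (hc : 1 ≤ c) (m : ℕ) :
    (#(sparseVectors ι α m) : ℝ) ≤
      c ^ m * (1 + (Fintype.card α - 1) / c) ^ Fintype.card ι := by
  have hentry : ∑ x : α, (if x ≠ 0 then c⁻¹ else 1) = 1 + (Fintype.card α - 1) / c := by
    have hcard := card_erase_add_one (mem_univ (0 : α))
    rw [sum_ite, sum_const, sum_const, nsmul_eq_mul, filter_ne', ← card_univ, ← hcard]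
    simp [filter_eq', div_eq_mul_inv, add_comm]
  have hsum : ∑ u : ι → α, ∏ i, (if u i ≠ 0 then c⁻¹ else 1) =
      (1 + (Fintype.card α - 1) / c) ^ Fintype.card ι := by
    rw [← hentry, ← Fintype.piFinset_univ,
      sum_prod_piFinset _ fun _ x => if x ≠ 0 then c⁻¹ else 1, prod_const, card_univ]
  rw [sparseVectors, natCast_card_filter, ← hsum, mul_sum]
  refine sum_le_sum fun u _ => ?_
  rw [prod_ite, prod_const, prod_const_one, mul_one, inv_pow, ← div_eq_mul_inv]
  split_ifs with h
  · rw [one_le_div (by positivity)]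
    exact pow_le_pow_right₀ hc h.2.le
  · positivity

end sparseVectors

section levels

variable {ι : Type*} [Fintype ι] {p : ℕ}

lemma isUnit_intCast_prime_pow_iff (hp : p.Prime) {j : ℕ} (hj : j ≠ 0) (x : ℤ) :
    IsUnit (x : ZMod (p ^ j)) ↔ (x : ZMod p) ≠ 0 := by
  rw [ZMod.coe_int_isUnit_iff_isCoprime, Nat.cast_pow, IsCoprime.pow_left_iff (by lia), ne_eq,
    ZMod.intCast_zmod_eq_zero_iff_dvd]
  exact (Nat.prime_iff_prime_int.1 hp).coprime_iff_not_dvd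

lemma signProb_intCast_le_of_dvd {q r : ℕ} (h : r ∣ q) (v : ι → ℤ) :
    signProb (Int.cast ∘ v : ι → ZMod q) ≤ signProb (Int.cast ∘ v : ι → ZMod r) := by
  convert signProb_le_map (ZMod.castHom h (ZMod r)) (Int.cast ∘ v) using 2
  ext i
  simp

/-- As the modulus grows by factors `p`, the probability decreases, so `p` times its target value
bounds it at the first level where the target is missed. -/
lemma signProb_le_or_exists_level (p : ℕ) [NeZero p] (v : ι → ℤ) (J : ℕ) :
    signProb (Int.cast ∘ v : ι → ZMod (p ^ J)) ≤ 2 / p ^ J ∨ ∃ j ∈ Icc 1 J,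
      2 / p ^ j < signProb (Int.cast ∘ v : ι → ZMod (p ^ j)) ∧
        signProb (Int.cast ∘ v : ι → ZMod (p ^ j)) ≤ 2 * p / p ^ j := by
  induction J with
  | zero => exact Or.inl ((signProb_le_one _).trans (by norm_num))
  | succ J ih =>
    rcases ih with h | ⟨j, hj, h⟩
    · rcases le_or_gt (signProb (Int.cast ∘ v : ι → ZMod (p ^ (J + 1)))) (2 / p ^ (J + 1))
        with h' | h'
      · exact Or.inl h'
      · refine Or.inr ⟨J + 1, by simp, h', ?_⟩
        calc signProb (Int.cast ∘ v : ι → ZMod (p ^ (J + 1)))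
            ≤ signProb (Int.cast ∘ v : ι → ZMod (p ^ J)) :=
              signProb_intCast_le_of_dvd (pow_dvd_pow p J.le_succ) v
          _ ≤ 2 / p ^ J := h
          _ = 2 * p / p ^ (J + 1) := by
            have : (p : ℝ) ≠ 0 := NeZero.ne _
            rw [pow_succ]
            field_simp
    · exact Or.inr ⟨j, Icc_subset_Icc_right J.le_succ hj, h⟩

end levels

section kernel

variable {ι κ R S : Type*}

/-- The matrix with rows `signVec R (b k)`; over `ℝ` and for a square `b` it is `signMatrix n b`. -/
def signRows (R : Type*) [Ring R] (b : κ → ι → Bool) : Matrix κ ι R :=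
  Matrix.of fun k => signVec R (b k)

lemma map_signRows [Ring R] [Ring S] (f : R →+* S) (b : κ → ι → Bool) :
    (signRows R b).map f = signRows S b := by
  ext k i
  exact congrFun (map_comp_signVec f (b k)) i

variable [Fintype ι]

lemma exists_gcd_eq_one_mulVec_eq_zero [DecidableEq ι] {A : Matrix ι ι ℤ} (hA : A.det = 0) :
    ∃ v : ι → ℤ, univ.gcd v = 1 ∧ A *ᵥ v = 0 := by
  obtain ⟨v, hv, hAv⟩ := Matrix.exists_mulVec_eq_zero_iff.2 hA
  obtain ⟨i, hi⟩ := Function.ne_iff.1 hv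
  obtain ⟨w, hw, hgcd⟩ := extract_gcd v ⟨i, mem_univ i⟩
  have hvw : v = univ.gcd v • w := funext fun j => hw j (mem_univ j)
  have hv0 : univ.gcd v ≠ 0 := fun h => hi (gcd_eq_zero_iff.1 h i (mem_univ i))
  refine ⟨w, hgcd, ?_⟩
  rw [hvw, mulVec_smul] at hAv
  exact (smul_eq_zero.1 hAv).resolve_left hv0

lemma intCast_comp_ne_zero {p : ℕ} (hp : p ≠ 1) {v : ι → ℤ} (hv : univ.gcd v = 1) :
    (Int.cast ∘ v : ι → ZMod p) ≠ 0 := fun h => hp <| by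
  have hdvd : (p : ℤ) ∣ univ.gcd v := dvd_gcd fun i _ =>
    (ZMod.intCast_zmod_eq_zero_iff_dvd (v i) p).1 (congrFun h i)
  rw [hv] at hdvd
  exact_mod_cast Int.eq_one_of_dvd_one (by positivity) hdvd

lemma exists_row_forall_mulVec_eq_zero [DecidableEq ι] [CommRing R] [IsDomain R]
    {A : Matrix ι ι R} (hA : A.det = 0) :
    ∃ i, ∀ v, (∀ k ≠ i, A k ⬝ᵥ v = 0) → A *ᵥ v = 0 := by
  obtain ⟨w, hw, hwA⟩ := Matrix.exists_vecMul_eq_zero_iff.2 hA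
  obtain ⟨i, hi⟩ := Function.ne_iff.1 hw
  refine ⟨i, fun v hv => funext fun k => ?_⟩
  rcases eq_or_ne k i with rfl | hk
  · have hsum : w ⬝ᵥ A *ᵥ v = 0 := by rw [dotProduct_mulVec, hwA, zero_dotProduct]
    rw [dotProduct, sum_eq_single k (fun j _ hj => by rw [mulVec, hv j hj, mul_zero])
      (by simp)] at hsum
    exact (mul_eq_zero.1 hsum).resolve_left hi
  · exact hv k hk

lemma signRows_mulVec_comp [Ring R] [Ring S] (f : R →+* S) {b : κ → ι → Bool} {u : ι → R}
    (hu : signRows R b *ᵥ u = 0) : signRows S b *ᵥ (f ∘ u) = 0 := by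
  ext k
  exact (map_signVec_dotProduct f (b k) u).symm.trans <|
    (congrArg f (congrFun hu k)).trans (map_zero f)

lemma det_signRows_int_eq_zero {n : ℕ} {b : Fin n → Fin n → Bool}
    (hb : (signMatrix n b).det = 0) : (signRows ℤ b).det = 0 := by
  have hmap : signMatrix n b = (Int.castRingHom ℝ).mapMatrix (signRows ℤ b) :=
    (map_signRows (Int.castRingHom ℝ) b).symm
  rw [hmap, ← RingHom.map_det] at hb
  exact Int.cast_eq_zero.1 hb

end kernel

section singular

variable {ι κ R : Type*} [Fintype ι] [DecidableEq ι] [Fintype κ] [DecidableEq κ] [Ring R]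

open scoped Classical in
/-- The Boolean arrays whose sign matrix annihilates some vector of `T`. -/
noncomputable def kernelMeets (κ : Type*) [Fintype κ] [DecidableEq κ] (T : Finset (ι → R)) :
    Finset (κ → ι → Bool) :=
  {b | ∃ u ∈ T, signRows R b *ᵥ u = 0}

lemma mem_kernelMeets {T : Finset (ι → R)} {b : κ → ι → Bool} :
    b ∈ kernelMeets κ T ↔ ∃ u ∈ T, signRows R b *ᵥ u = 0 := by
  simp [kernelMeets]

lemma dens_kernelMeets_le (T : Finset (ι → R)) {p : ℝ} (hT : ∀ u ∈ T, signProb u ≤ p) :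
    ((kernelMeets κ T).dens : ℝ) ≤ #T * p ^ Fintype.card κ := by
  classical
  have hunion : kernelMeets κ T = T.biUnion fun u =>
      Fintype.piFinset fun _ => {s : ι → Bool | signVec R s ⬝ᵥ u = 0} := by
    ext b
    simp [mem_kernelMeets, funext_iff, signRows, mulVec]
  calc ((kernelMeets κ T).dens : ℝ)
      ≤ ∑ u ∈ T, ((Fintype.piFinset fun _ : κ =>
          {s : ι → Bool | signVec R s ⬝ᵥ u = 0}).dens : ℝ) := by
        rw [hunion]
        exact_mod_cast dens_biUnion_le
    _ = ∑ u ∈ T, signProb u ^ Fintype.card κ := by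
        simp_rw [signProb_eq_dens, dens_piFinset_const, NNRat.cast_pow]
    _ ≤ ∑ _u ∈ T, p ^ Fintype.card κ :=
        sum_le_sum fun u hu => pow_le_pow_left₀ (signProb_nonneg u) (hT u hu) _
    _ = #T * p ^ Fintype.card κ := by rw [sum_const, nsmul_eq_mul]

lemma dens_kernelMeets_sparseVectors_le {q : ℕ} [NeZero q] (hq : Odd q) {c : ℝ} (hc : 1 ≤ c)
    (m : ℕ) : ((kernelMeets κ (sparseVectors ι (ZMod q) m)).dens : ℝ) ≤
      c ^ m * (1 + (q - 1) / c) ^ Fintype.card ι * (1 / 2) ^ Fintype.card κ := by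
  refine (dens_kernelMeets_le (p := 1 / 2) _ fun u hu => ?_).trans ?_
  · obtain ⟨i, hi⟩ := Function.ne_iff.1 ((mem_filter_univ _).1 hu).1
    exact signProb_le_half u ((isUnit_two_of_odd hq).mul_right_eq_zero.not.2 hi)
  · gcongr
    simpa [ZMod.card] using card_sparseVectors_le (ι := ι) (α := ZMod q) hc m

/-- A primitive integer vector orthogonal to all rows of the sign matrix of `c`, if there is one;
an arbitrary vector otherwise. -/
noncomputable def orthogonalVector (c : κ → ι → Bool) : ι → ℤ :=
  Classical.epsilon fun v => univ.gcd v = 1 ∧ signRows ℤ c *ᵥ v = 0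

lemma exists_mulVec_orthogonalVector_eq_zero {b : ι → ι → Bool} (hb : (signRows ℤ b).det = 0) :
    ∃ i : ι, univ.gcd (orthogonalVector fun k : {k // k ≠ i} => b k) = 1 ∧
      signRows ℤ b *ᵥ orthogonalVector (fun k : {k // k ≠ i} => b k) = 0 := by
  obtain ⟨v, hv, hbv⟩ := exists_gcd_eq_one_mulVec_eq_zero hb
  obtain ⟨i, hi⟩ := exists_row_forall_mulVec_eq_zero hb
  have hex : ∃ v, univ.gcd v = 1 ∧ signRows ℤ (fun k : {k // k ≠ i} => b k) *ᵥ v = 0 :=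
    ⟨v, hv, funext fun k => congrFun hbv k⟩
  obtain ⟨hgcd, hker⟩ := Classical.epsilon_spec hex
  exact ⟨i, hgcd, hi _ fun k hk => congrFun hker ⟨k, hk⟩⟩

open scoped Classical in
/-- The Boolean matrices whose `i`-th row of signs is orthogonal to the vector `orthogonalVector`
chosen from the other rows, when the probability of this is at most `t`. -/
noncomputable def rowOrthogonal (i : ι) (t : ℝ) : Finset (ι → ι → Bool) :=
  {b | signProb (orthogonalVector fun k : {k // k ≠ i} => b k) ≤ t ∧
    signVec ℤ (b i) ⬝ᵥ orthogonalVector (fun k : {k // k ≠ i} => b k) = 0}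

lemma dens_rowOrthogonal_le (i : ι) {t : ℝ} (ht : 0 ≤ t) : ((rowOrthogonal i t).dens : ℝ) ≤ t := by
  classical
  let A (c : {k // k ≠ i} → ι → Bool) : Finset (ι → Bool) :=
    {s | signProb (orthogonalVector c) ≤ t ∧ signVec ℤ s ⬝ᵥ orthogonalVector c = 0}
  have hA (c) : ((A c).dens : ℝ) ≤ t := by
    by_cases hc : signProb (orthogonalVector c) ≤ t
    · simp only [A, hc, true_and, ← signProb_eq_dens]
    · simp [A, hc, ht]
  convert dens_apply_mem_le i A ht hA using 3
  ext b
  simp [A, rowOrthogonal]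

/-- A singular sign matrix annihilates the primitive vector `w` chosen from all rows but one. Modulo
powers of `p`, either `w` looks unbiased up to level `J`, and then a single row is unlikely to be
orthogonal to it, or `w` is biased at some level, where it is sparse or structured. -/
lemma singular_subset {p : ℕ} [NeZero p] (hp : p.Prime) (m J : ℕ) :
    ({b : ι → ι → Bool | (signRows ℤ b).det = 0} : Finset (ι → ι → Bool)) ⊆
      kernelMeets ι (sparseVectors ι (ZMod p) m) ∪
      ((Icc 1 J).biUnion fun j =>
        kernelMeets ι {u ∈ biasedVectors ι (p ^ j) m | signProb u ≤ 2 * p / p ^ j}) ∪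
      univ.biUnion fun i => rowOrthogonal i (2 / p ^ J) := by
  intro b hb
  rw [mem_filter_univ] at hb
  obtain ⟨i, hgcd, hker⟩ := exists_mulVec_orthogonalVector_eq_zero hb
  set w := orthogonalVector fun k : {k // k ≠ i} => b k
  have hmod (q : ℕ) : signRows (ZMod q) b *ᵥ (Int.cast ∘ w) = 0 :=
    signRows_mulVec_comp (Int.castRingHom (ZMod q)) hker
  rcases signProb_le_or_exists_level p w J with hsmall | ⟨j, hj, hlt, hle⟩
  · refine mem_union_right _ (mem_biUnion.2 ⟨i, mem_univ i, (mem_filter_univ _).2 ⟨?_, ?_⟩⟩)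
    · exact (signProb_le_map (Int.castRingHom (ZMod (p ^ J))) w).trans hsmall
    · exact congrFun hker i
  · refine mem_union_left _ ?_
    rcases lt_or_ge #{i | (w i : ZMod p) ≠ 0} m with hsparse | hmany
    · exact mem_union_left _ (mem_kernelMeets.2 ⟨_, (mem_filter_univ _).2
        ⟨intCast_comp_ne_zero hp.ne_one hgcd, hsparse⟩, hmod p⟩)
    · refine mem_union_right _ (mem_biUnion.2 ⟨j, hj, mem_kernelMeets.2 ⟨_, mem_filter.2
        ⟨(mem_filter_univ _).2 ⟨?_, by exact_mod_cast hlt⟩, hle⟩, hmod _⟩⟩)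
      have hj0 : j ≠ 0 := by
        have := (mem_Icc.1 hj).1
        lia
      simpa only [Function.comp_apply, isUnit_intCast_prime_pow_iff hp hj0] using hmany

lemma dens_singular_le {p : ℕ} [NeZero p] (hp : p.Prime) (m J : ℕ) {a c : ℝ}
    (hsparse : ((kernelMeets ι (sparseVectors ι (ZMod p) m)).dens : ℝ) ≤ a)
    (hbiased : ∀ j ∈ Icc 1 J, (#(biasedVectors ι (p ^ j) m) : ℝ) ≤ (c * p ^ j) ^ Fintype.card ι) :
    (({b : ι → ι → Bool | (signRows ℤ b).det = 0} : Finset (ι → ι → Bool)).dens : ℝ) ≤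
      a + J * (2 * p * c) ^ Fintype.card ι + Fintype.card ι * (2 / p ^ J) := by
  have hlevel (j) (hj : j ∈ Icc 1 J) : ((kernelMeets ι
      {u ∈ biasedVectors ι (p ^ j) m | signProb u ≤ 2 * p / p ^ j}).dens : ℝ) ≤
      (2 * p * c) ^ Fintype.card ι := by
    calc _ ≤ (#{u ∈ biasedVectors ι (p ^ j) m | signProb u ≤ 2 * p / p ^ j} : ℝ) *
          (2 * p / p ^ j) ^ Fintype.card ι := dens_kernelMeets_le _ fun u hu => (mem_filter.1 hu).2
      _ ≤ (c * p ^ j) ^ Fintype.card ι * (2 * p / p ^ j) ^ Fintype.card ι := by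
          gcongr
          exact (Nat.cast_le.2 (card_filter_le _ _)).trans (hbiased j hj)
      _ = (2 * p * c) ^ Fintype.card ι := by
          have : (p : ℝ) ≠ 0 := NeZero.ne _
          rw [← mul_pow]
          field_simp
  have hunion := calc ({b : ι → ι → Bool | (signRows ℤ b).det = 0} : Finset _).dens
      ≤ _ := (dens_le_dens (singular_subset hp m J)).trans (dens_union_le _ _)
    _ ≤ _ := add_le_add ((dens_union_le _ _).trans (add_le_add_right (dens_biUnion_le) _))
        (dens_biUnion_le)
  have hlevels := sum_le_sum hlevel
  have hrows := sum_le_sum fun (i : ι) (_ : i ∈ univ) =>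
    dens_rowOrthogonal_le i (t := 2 / p ^ J) (by positivity)
  rw [sum_const, nsmul_eq_mul, Nat.card_Icc, Nat.add_sub_cancel] at hlevels
  rw [sum_const, nsmul_eq_mul, card_univ] at hrows
  refine (NNRat.cast_le.2 hunion).trans ?_
  simp only [NNRat.cast_add, NNRat.cast_sum]
  exact add_le_add (add_le_add hsparse hlevels) hrows

end singular

section asymptotics

lemma dens_kernelMeets_sparseVectors_three_le (n : ℕ) :
    ((kernelMeets (Fin n) (sparseVectors (Fin n) (ZMod 3) (n / 16))).dens : ℝ) ≤ (3 / 4) ^ n := by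
  have hpow : (8 : ℝ) ^ (n / 16) ≤ (6 / 5) ^ n := by
    calc (8 : ℝ) ^ (n / 16) ≤ ((6 / 5) ^ 16) ^ (n / 16) := by gcongr; norm_num
      _ = (6 / 5) ^ (16 * (n / 16)) := (pow_mul _ _ _).symm
      _ ≤ (6 / 5) ^ n := pow_le_pow_right₀ (by norm_num) (Nat.mul_div_le n 16)
  calc _ ≤ (8 : ℝ) ^ (n / 16) * (1 + (3 - 1) / 8) ^ n * (1 / 2) ^ n := by
        simpa using dens_kernelMeets_sparseVectors_le (ι := Fin n) (κ := Fin n) (q := 3)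
          (by decide) (c := 8) (by norm_num) (n / 16)
    _ ≤ (6 / 5) ^ n * (1 + (3 - 1) / 8) ^ n * (1 / 2) ^ n := by gcongr
    _ = (3 / 4) ^ n := by
        rw [← mul_pow, ← mul_pow]
        norm_num

lemma exists_three_pow_le (n : ℕ) :
    ∃ J ≤ n, (3 : ℝ) ^ J ≤ (10 / 9) ^ n ∧ 2 / (3 : ℝ) ^ J ≤ 6 * (9 / 10) ^ n := by
  obtain ⟨J, hle, hlt⟩ := exists_nat_pow_near (x := (10 / 9 : ℝ) ^ n) (y := 3)
    (one_le_pow₀ (by norm_num)) (by norm_num)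
  refine ⟨J, ?_, hle, ?_⟩
  · have : (3 : ℝ) ^ J ≤ 3 ^ n := hle.trans (pow_le_pow_left₀ (by norm_num) (by norm_num) n)
    exact (pow_le_pow_iff_right₀ (by norm_num)).1 this
  · have hone : (9 / 10 : ℝ) ^ n * (10 / 9) ^ n = 1 := by
      rw [← mul_pow]
      norm_num
    rw [div_le_iff₀ (by positivity)]
    rw [pow_succ] at hlt
    calc (2 : ℝ) = 2 * ((9 / 10) ^ n * (10 / 9) ^ n) := by rw [hone, mul_one]
      _ ≤ 2 * ((9 / 10) ^ n * (3 ^ J * 3)) := by gcongr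
      _ = 6 * (9 / 10) ^ n * 3 ^ J := by ring

lemma eventually_dens_singular_le : ∀ᶠ n : ℕ in Filter.atTop,
    (({b : Fin n → Fin n → Bool | (signRows ℤ b).det = 0} : Finset _).dens : ℝ) ≤
      8 * n * (9 / 10) ^ n := by
  filter_upwards [eventually_card_biasedVectors_le (η := 1 / 12) (by norm_num) (by norm_num),
    Filter.eventually_ge_atTop 1] with n hbiased hn
  obtain ⟨J, hJn, hJ, htail⟩ := exists_three_pow_le n
  have hmain := dens_singular_le Nat.prime_three (n / 16) J (c := 1 / 12)
    (dens_kernelMeets_sparseVectors_three_le n) fun j hj => by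
      have hle : ((3 ^ j : ℕ) : ℝ) ≤ (10 / 9) ^ n := by
        push_cast
        exact (pow_le_pow_right₀ (by norm_num) (mem_Icc.1 hj).2).trans hJ
      simpa using hbiased (3 ^ j) (Odd.pow (by decide)) hle
  rw [Fintype.card_fin] at hmain
  have h1n : (1 : ℝ) ≤ n := by exact_mod_cast hn
  calc _ ≤ (3 / 4 : ℝ) ^ n + J * (2 * (3 : ℕ) * (1 / 12)) ^ n + n * (2 / (3 : ℕ) ^ J) := hmain
    _ = (3 / 4 : ℝ) ^ n + J * (1 / 2) ^ n + n * (2 / 3 ^ J) := by norm_num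
    _ ≤ (9 / 10) ^ n + n * (9 / 10) ^ n + n * (6 * (9 / 10) ^ n) := by
        have hsparse : (3 / 4 : ℝ) ^ n ≤ (9 / 10) ^ n :=
          pow_le_pow_left₀ (by norm_num) (by norm_num) n
        have hlevel : (1 / 2 : ℝ) ^ n ≤ (9 / 10) ^ n :=
          pow_le_pow_left₀ (by norm_num) (by norm_num) n
        gcongr
    _ = (1 + 7 * n) * (9 / 10) ^ n := by ring
    _ ≤ 8 * n * (9 / 10) ^ n := by
        gcongr
        linarith

theorem prob_random_sign_matrix_singular_bound_general {r : ℝ} (hr : 9 / 10 < r) :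
    ∃ N : ℕ, ∀ n ≥ N,
      (Nat.card {b : Fin n → Fin n → Bool // (signMatrix n b).det = 0} : ℝ) / 2 ^ (n ^ 2) ≤
        r ^ n := by
  classical
  have hr0 : 0 < r := by linarith
  have hlim := tendsto_self_mul_const_pow_of_lt_one (r := 9 / 10 / r) (by positivity)
    ((div_lt_one hr0).2 hr)
  refine Filter.eventually_atTop.1 ?_
  filter_upwards [eventually_dens_singular_le,
    hlim.eventually_lt_const (show (0 : ℝ) < 1 / 8 by norm_num)] with n hdens hsmall
  rw [div_pow, ← mul_div_assoc, div_lt_iff₀ (by positivity)] at hsmall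
  calc (Nat.card {b : Fin n → Fin n → Bool // (signMatrix n b).det = 0} : ℝ) / 2 ^ (n ^ 2)
      = (({b : Fin n → Fin n → Bool | (signMatrix n b).det = 0} : Finset _).dens : ℝ) := by
        simp [nnratCast_dens, Fintype.card_subtype, sq, pow_mul]
    _ ≤ (({b : Fin n → Fin n → Bool | (signRows ℤ b).det = 0} : Finset _).dens : ℝ) := by
        refine NNRat.cast_le.2 (dens_le_dens fun b hb => ?_)
        rw [mem_filter_univ] at hb ⊢
        exact det_signRows_int_eq_zero hb
    _ ≤ 8 * n * (9 / 10) ^ n := hdens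
    _ ≤ r ^ n := by linarith

end asymptotics

section entropy

lemma binEntropy_nonneg {x : ℝ} (h0 : 0 < x) (h1 : x < 1) : 0 ≤ binEntropy x := by
  have h2 : 0 < 1 - x := by linarith
  refine add_nonneg (mul_nonneg h0.le (Real.logb_nonneg (by norm_num) ?_))
    (mul_nonneg h2.le (Real.logb_nonneg (by norm_num) ?_))
  · rw [le_div_iff₀ h0]
    linarith
  · rw [le_div_iff₀ h2]
    linarith

lemma lt_of_binEntropy_eq {ε : ℝ} (hε : ε ∈ Set.Ioo (0 : ℝ) (1 / 2))
    (h : binEntropy ε + ε / Real.logb 2 (16 / 15) = 1) : ε < 1 / 10 := by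
  have hpos : 0 < Real.logb 2 (16 / 15) := Real.logb_pos (by norm_num) (by norm_num)
  have hlog : Real.logb 2 (16 / 15) < 1 / 10 := by
    have h10 : Real.logb 2 ((16 / 15) ^ 10) < 1 :=
      (Real.logb_lt_iff_lt_rpow (by norm_num) (by norm_num)).2 (by norm_num)
    rw [Real.logb_pow] at h10
    push_cast at h10
    linarith
  have h1 := binEntropy_nonneg hε.1 (by linarith [hε.2])
  have h2 : ε / Real.logb 2 (16 / 15) ≤ 1 := by linarith
  rw [div_le_one hpos] at h2
  linarith

end entropy

/-- If `ε ∈ (0, 1/2)` solves `h(ε) + ε / log₂(16/15) = 1`, then the probability that a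
uniformly random `n × n` `±1` matrix is singular is at most `(1 - ε + δ)^n` for large `n`. -/
theorem prob_random_sign_matrix_singular_bound (ε : ℝ) (hε : ε ∈ Set.Ioo (0 : ℝ) (1 / 2))
    (hεeq : binEntropy ε + ε / Real.logb 2 (16 / 15) = 1) :
    ∀ δ > (0 : ℝ), ∃ N : ℕ, ∀ n ≥ N,
      (Nat.card {b : Fin n → Fin n → Bool // (signMatrix n b).det = 0} : ℝ) / 2 ^ (n ^ 2) ≤
        (1 - ε + δ) ^ n := fun _ hδ =>
  prob_random_sign_matrix_singular_bound_general (by linarith [lt_of_binEntropy_eq hε hεeq])
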